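/- Deodhar's defect formula: for any word \underline{w} = s₁s₂⋯s_m in the generators S, the product \underline{H}_{s₁}⋯\underline{H}_{s_m} in the Hecke algebra equals the sum over all 01-sequences e of length m of v^{d(e)}·H_{\underline{w}^e}, where \underline{w}^e = s₁^{e₁}⋯s_m^{e_m} is the element expressed by the subsequence e and d(e) is the defect of e. -/

import Mathlib

open LaurentPolynomial

/-- The Bruhat stroll associated to a word `s₁⋯s_m` and a 01-sequence `e`:
`x_i = s₁^{e₁}⋯s_i^{e_i}`. -/
def stroll {B W : Type*} [Group W] {M : CoxeterMatrix B} (cs : CoxeterSystem M W)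
    {m : ℕ} (s : Fin m → B) (e : Fin m → Bool) (i : ℕ) : W :=
  ((List.ofFn (fun j : Fin m => if e j then cs.simple (s j) else 1)).take i).prod

/-- The defect of a 01-sequence `e`: the number of indices `i` with `e_i = 0` labelled `U`
(i.e. `x_{i-1}s_i > x_{i-1}`) minus the number of indices with `e_i = 0` labelled `D`. -/
noncomputable def defect {B W : Type*} [Group W] {M : CoxeterMatrix B} (cs : CoxeterSystem M W)
    {m : ℕ} (s : Fin m → B) (e : Fin m → Bool) : ℤ :=
  ∑ i : Fin m, if e i then 0 else
    (if cs.length (stroll cs s e i.val * cs.simple (s i)) > cs.length (stroll cs s e i.val)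
      then 1 else -1)

/-!
Right multiplication by `H_s + v` reads `H_x (H_s + v) = H_{xs} + v^{±1} H_x`, with the sign `+`
exactly when `xs > x`: for `xs < x` the term `-v H_x` of the quadratic relation cancels `v H_x`.
The two summands are the two ways to prolong a stroll ending at `x`: take the letter `s`, at
defect `0`, or skip it, at defect `1` or `-1` according to the label. The formula follows by
induction on the length of the word, splitting off its last letter.
-/

theorem sum_pi_fin_succ_eq_sum_snoc {m : ℕ} {α : Fin (m + 1) → Type*} [∀ i, Fintype (α i)]
    {N : Type*} [AddCommMonoid N] (f : (∀ i, α i) → N) :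
    ∑ e, f e = ∑ e : ∀ i : Fin m, α i.castSucc, ∑ a, f (Fin.snoc e a) := by
  rw [← (Fin.snocEquiv α).sum_comp, Fintype.sum_prod_type_right]
  rfl

/-- The contribution to the defect of one step of a stroll: at the element `x`, the letter `i` is
taken if `b` is true and skipped otherwise. -/
noncomputable def stepDefect {B W : Type*} [Group W] {M : CoxeterMatrix B} (cs : CoxeterSystem M W)
    (x : W) (i : B) (b : Bool) : ℤ :=
  if b then 0 else if cs.length (x * cs.simple i) > cs.length x then 1 else -1

section Stroll

variable {B W : Type*} [Group W] {M : CoxeterMatrix B} (cs : CoxeterSystem M W) {m : ℕ}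

theorem stroll_succ (s : Fin m → B) (e : Fin m → Bool) (i : Fin m) :
    stroll cs s e (i + 1) = stroll cs s e i * if e i then cs.simple (s i) else 1 :=
  Fin.partialProd_succ _ i

theorem stroll_init (s : Fin (m + 1) → B) (e : Fin (m + 1) → Bool) {i : ℕ} (hi : i ≤ m) :
    stroll cs (Fin.init s) (Fin.init e) i = stroll cs s e i :=
  Fin.partialProd_init (f := fun j => if e j then cs.simple (s j) else 1)
    ⟨i, Nat.lt_succ_of_le hi⟩

theorem stroll_succ_last (s : Fin (m + 1) → B) (e : Fin (m + 1) → Bool) :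
    stroll cs s e (m + 1) = stroll cs (Fin.init s) (Fin.init e) m *
      if e (Fin.last m) then cs.simple (s (Fin.last m)) else 1 := by
  rw [stroll_init cs s e le_rfl]
  exact stroll_succ cs s e (Fin.last m)

theorem defect_eq_sum_stepDefect (s : Fin m → B) (e : Fin m → Bool) :
    defect cs s e = ∑ i : Fin m, stepDefect cs (stroll cs s e i) (s i) (e i) :=
  rfl

theorem defect_eq_defect_init_add_stepDefect (s : Fin (m + 1) → B) (e : Fin (m + 1) → Bool) :
    defect cs s e = defect cs (Fin.init s) (Fin.init e) +
      stepDefect cs (stroll cs (Fin.init s) (Fin.init e) m) (s (Fin.last m)) (e (Fin.last m)) := by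
  simp only [defect_eq_sum_stepDefect, Fin.sum_univ_castSucc, Fin.val_castSucc, Fin.val_last,
    stroll_init cs s e le_rfl, stroll_init cs s e (Fin.is_lt _).le, Fin.init]

end Stroll

theorem standard_mul_kazhdanLusztig_simple {B W : Type*} [Group W] {M : CoxeterMatrix B}
    (cs : CoxeterSystem M W) {A : Type*} [Ring A] [Algebra (LaurentPolynomial ℤ) A] {H : W → A}
    (hmul_gt : ∀ (w : W) (i : B), cs.length (w * cs.simple i) > cs.length w →
      H w * H (cs.simple i) = H (w * cs.simple i))
    (hmul_lt : ∀ (w : W) (i : B), cs.length (w * cs.simple i) < cs.length w →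
      H w * H (cs.simple i) = H (w * cs.simple i) +
        algebraMap (LaurentPolynomial ℤ) A (T (-1) - T 1) * H w)
    (x : W) (i : B) :
    H x * (H (cs.simple i) + algebraMap (LaurentPolynomial ℤ) A (T 1)) =
      ∑ b : Bool, algebraMap (LaurentPolynomial ℤ) A (T (stepDefect cs x i b)) *
        H (x * if b then cs.simple i else 1) := by
  suffices h_two_terms : H x * (H (cs.simple i) + algebraMap (LaurentPolynomial ℤ) A (T 1)) =
      H (x * cs.simple i) +
        algebraMap (LaurentPolynomial ℤ) A (T (stepDefect cs x i false)) * H x by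
    simpa [stepDefect] using h_two_terms
  rw [mul_add, ← Algebra.commutes]
  rcases (cs.length_mul_simple_ne x i).lt_or_gt with h_down | h_up
  · simp only [stepDefect, Bool.false_eq_true, if_false, gt_iff_lt, h_down.not_gt,
      hmul_lt x i h_down, map_sub]
    noncomm_ring
  · simp only [stepDefect, Bool.false_eq_true, if_false, if_pos h_up, hmul_gt x i h_up]

/-- Deodhar's defect formula: for any word `s₁⋯s_m` in the generators,
`H̲_{s₁}⋯H̲_{s_m} = Σ_e v^{d(e)}·H_{w^e}`, the sum over all 01-sequences `e` of length `m`,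
where `w^e` is the element expressed by the subsequence `e` and `d(e)` is its defect. -/
theorem deodhar_defect_formula {B W : Type*} [Group W] {M : CoxeterMatrix B}
    (cs : CoxeterSystem M W)
    (A : Type*) [Ring A] [Algebra (LaurentPolynomial ℤ) A]
    (H : W → A) (h1 : H 1 = 1)
    (hmul_gt : ∀ (w : W) (i : B), cs.length (w * cs.simple i) > cs.length w →
      H w * H (cs.simple i) = H (w * cs.simple i))
    (hmul_lt : ∀ (w : W) (i : B), cs.length (w * cs.simple i) < cs.length w →
      H w * H (cs.simple i) = H (w * cs.simple i) +
        algebraMap (LaurentPolynomial ℤ) A (T (-1) - T 1) * H w)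
    (m : ℕ) (s : Fin m → B) :
    (List.ofFn (fun i : Fin m =>
        H (cs.simple (s i)) + algebraMap (LaurentPolynomial ℤ) A (T 1))).prod =
      ∑ e : Fin m → Bool,
        algebraMap (LaurentPolynomial ℤ) A (T (defect cs s e)) * H (stroll cs s e m) := by
  induction m with
  | zero => simp [stroll, defect, h1]
  | succ m ih =>
    calc
      _ = (∑ e, algebraMap (LaurentPolynomial ℤ) A (T (defect cs (Fin.init s) e)) *
            H (stroll cs (Fin.init s) e m)) *
            (H (cs.simple (s (Fin.last m))) + algebraMap (LaurentPolynomial ℤ) A (T 1)) := by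
        rw [List.ofFn_succ', List.concat_eq_append, List.prod_append, List.prod_singleton,
          ← ih (Fin.init s)]
        rfl
      _ = ∑ e, ∑ b : Bool, algebraMap (LaurentPolynomial ℤ) A (T (defect cs (Fin.init s) e)) *
            (algebraMap (LaurentPolynomial ℤ) A
                (T (stepDefect cs (stroll cs (Fin.init s) e m) (s (Fin.last m)) b)) *
              H (stroll cs (Fin.init s) e m * if b then cs.simple (s (Fin.last m)) else 1)) := by
        simp only [Finset.sum_mul, mul_assoc, Finset.mul_sum,
          standard_mul_kazhdanLusztig_simple cs hmul_gt hmul_lt]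
      _ = ∑ e : Fin m → Bool, ∑ b : Bool,
            algebraMap (LaurentPolynomial ℤ) A (T (defect cs s (Fin.snoc e b))) *
              H (stroll cs s (Fin.snoc e b) (m + 1)) := by
        simp only [← mul_assoc, ← map_mul, ← T_add, defect_eq_defect_init_add_stepDefect,
          stroll_succ_last, Fin.init_snoc, Fin.snoc_last]
      _ = _ := by rw [sum_pi_fin_succ_eq_sum_snoc]
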